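/- Let S² be the unit sphere in ℝ³. Let f : S² → S² be a homeomorphism isotopic to the identity, let F be a finite subset of the fixed-point set Fix(f) = {x : f(x) = x} with at least 3 elements, and let k ≥ 1 be an integer such that f^k is isotopic to the identity relative to F. Then f is isotopic to the identity relative to F. -/

import Mathlib

open Metric

/-- `f` is isotopic to the identity relative to `F`: there is a continuous map
`H : [0,1] × X → X` with `H t` a homeomorphism for every `t`, `H 0 = id`,
`H 1 = f`, and `H t x = x` for every `x ∈ F` and every `t`. -/
def IsotopicToIdRel {X : Type*} [TopologicalSpace X] (f : X → X) (F : Set X) : Prop :=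
  ∃ H : unitInterval × X → X, Continuous H ∧
    (∀ t : unitInterval, IsHomeomorph fun x => H (t, x)) ∧
    (∀ x, H (0, x) = x) ∧ (∀ x, H (1, x) = f x) ∧
    (∀ t : unitInterval, ∀ x ∈ F, H (t, x) = x)

/-!
Identify the sphere with `ℂ ∪ {∞}`. Composing an isotopy from `id` to `f` with the Möbius
transformations that bring the images of three points of `F` back to these points makes it an
isotopy relative to three points, and a change of coordinates makes one of them `∞`. The remaining
points of `F` are added one by one. Suppose `f` is isotopic to `id` relative to `A ∪ {∞}`, with
`A ⊆ ℂ` finite with at least two points, and let `p ∈ F` be a further point. Its trace under the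
isotopy is a loop `γ` in `ℂ \ A`, and conjugation by `γ` is the action of `f` on `π₁(ℂ \ A, p)`.
As `f^k` is isotopic to `id` relative to `A ∪ {p, ∞}`, it acts trivially, so `γ ^ k` is central.
But `π₁(ℂ \ A, p)` is free and not abelian, so that `γ = 1`, and point pushing along a contraction
of `γ` turns the isotopy into one that fixes `p` as well.

For the freeness, cover `ℂ \ A` by the complements of the upward and of the downward rays from the
points of `A`. These are contractible, and the monodromy of a covering with fibre a free group on
the components of their intersection embeds `π₁(ℂ \ A, p)` into that free group; its image is free
by the Nielsen–Schreier theorem.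
-/

open Topology unitInterval

/-! ### Roots of central elements in groups embedded in free groups -/

section FreeGroup

variable {α G : Type*} [Group G]

theorem freeGroup_center_eq_bot [Nontrivial α] : Subgroup.center (FreeGroup α) = ⊥ := by
  classical
  refine (Subgroup.eq_bot_iff_forall _).2 fun z hz ↦ by_contra fun hz1 ↦ ?_
  obtain ⟨⟨x, e⟩, L, hL⟩ := List.exists_cons_of_ne_nil (mt FreeGroup.toWord_eq_nil_iff.1 hz1)
  obtain ⟨y, hy⟩ := exists_ne x
  -- The word `y z` is already reduced, so `y z = z y` would force `z` to start with `y`.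
  have reduced_word : (FreeGroup.of y * z).toWord = (y, true) :: (x, e) :: L := by
    have hred : FreeGroup.reduce ((x, e) :: L) = (x, e) :: L := by
      rw [← hL, FreeGroup.reduce_toWord]
    rw [FreeGroup.toWord_mul, FreeGroup.toWord_of, hL, List.singleton_append,
      FreeGroup.reduce.cons, hred]
    simp [hy]
  have sublist := FreeGroup.toWord_mul_sublist z (FreeGroup.of y)
  rw [← Subgroup.mem_center_iff.1 hz, reduced_word, hL, FreeGroup.toWord_of] at sublist
  simpa [hy] using sublist.eq_of_length (by simp)

theorem freeGroup_commute [Subsingleton α] (a b : FreeGroup α) : Commute a b := by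
  induction a using FreeGroup.induction_on with
  | C1 => exact .one_left b
  | of x =>
    induction b using FreeGroup.induction_on with
    | C1 => exact .one_right _
    | of y => exact Subsingleton.elim x y ▸ .refl _
    | inv_of y hy => exact hy.inv_right
    | mul b c hb hc => exact hb.mul_right hc
  | inv_of x hx => exact hx.inv_left
  | mul a c ha hc => exact ha.mul_left hc

theorem freeGroup_not_commute {a b c : α} (hab : a ≠ b) (hac : a ≠ c) (hbc : b ≠ c) :
    ¬ Commute ((FreeGroup.of a)⁻¹ * FreeGroup.of b) ((FreeGroup.of a)⁻¹ * FreeGroup.of c) := by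
  intro h
  have generators_commute : Commute (Equiv.swap (0 : Fin 3) 1) (Equiv.swap 1 2) := by
    classical
    let θ : FreeGroup α →* Equiv.Perm (Fin 3) := FreeGroup.lift fun j ↦
      if j = b then Equiv.swap 0 1 else if j = c then Equiv.swap 1 2 else 1
    simpa [θ, hab, hac, hbc.symm] using h.map θ
  exact absurd generators_commute.eq (by decide)

theorem isFreeGroup_of_injective {φ : G →* FreeGroup α} (hφ : Function.Injective φ) :
    IsFreeGroup G :=
  .ofMulEquiv (MonoidHom.ofInjective hφ).symm

theorem isFreeGroup_eq_one_of_pow_mem_center [IsFreeGroup G] {u v : G} (huv : ¬ Commute u v)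
    {g : G} {k : ℕ} (hk : k ≠ 0) (hg : g ^ k ∈ Subgroup.center G) : g = 1 := by
  let e := IsFreeGroup.toFreeGroup G
  have : Nontrivial (IsFreeGroup.Generators G) := by
    refine not_subsingleton_iff_nontrivial.1 fun _ ↦ huv (.of_map e.injective ?_)
    exact freeGroup_commute (e u) (e v)
  have hpow : e g ^ k ∈ Subgroup.center (FreeGroup (IsFreeGroup.Generators G)) := by
    refine Subgroup.mem_center_iff.2 (e.surjective.forall.2 fun x ↦ ?_)
    rw [← map_pow, ← map_mul, ← map_mul, Subgroup.mem_center_iff.1 hg]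
  rw [freeGroup_center_eq_bot, Subgroup.mem_bot, pow_eq_one_iff_left hk] at hpow
  exact e.map_eq_one_iff.1 hpow

end FreeGroup

/-! ### Path classes subordinate to an open cover -/

section PathClasses

open Path

variable {Y : Type*} [TopologicalSpace Y]

theorem pathClass_induction {ι : Type*} {U : ι → Set Y} (hU : ∀ i, IsOpen (U i))
    (hcover : ⋃ i, U i = Set.univ) {P : ∀ x y : Y, Homotopic.Quotient x y → Prop}
    (mk : ∀ i x y (q : Path x y), (∀ t, q t ∈ U i) → P x y (.mk q))
    (trans : ∀ x y z (p : Homotopic.Quotient x y) (q : Homotopic.Quotient y z),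
      P x y p → P y z q → P x z (p.trans q))
    {x y : Y} (q : Homotopic.Quotient x y) : P x y q := by
  obtain ⟨γ, rfl⟩ := Homotopic.Quotient.mk_surjective q
  obtain ⟨t, t0, tmono, ⟨N, hN⟩, hsub⟩ := exists_monotone_Icc_subset_open_cover_unitInterval
    (c := fun i ↦ γ ⁻¹' U i) (fun i ↦ (hU i).preimage γ.continuous)
    (by rw [← Set.preimage_iUnion, hcover, Set.preimage_univ])
  have subpath_succ (n : ℕ) : P _ _ (.mk (γ.subpath (t n) (t (n + 1)))) := by
    obtain ⟨i, hi⟩ := hsub n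
    refine mk i _ _ _ fun s ↦ ?_
    obtain ⟨s', hs', h⟩ : γ.subpath (t n) (t (n + 1)) s ∈ γ '' Set.Icc (t n) (t (n + 1)) :=
      Path.range_subpath_of_le γ _ _ (tmono n.le_succ) ▸ Set.mem_range_self s
    exact h ▸ hi hs'
  have subpath_zero (n : ℕ) : P _ _ (.mk (γ.subpath (t 0) (t (n + 1)))) := by
    induction n with
    | zero => exact subpath_succ 0
    | succ n ih =>
      have h := trans _ _ _ _ _ ih (subpath_succ (n + 1))
      rwa [← Homotopic.Quotient.mk_trans,
        Homotopic.Quotient.eq.2 ⟨Path.Homotopy.subpathTransSubpath γ _ _ _⟩] at h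
  have whole := subpath_zero N
  rw [t0, hN (N + 1) N.le_succ, Path.subpath_zero_one] at whole
  have of_cast (x' y' : Y) (hx : x' = x) (hy : y' = y) (h : P x' y' (.mk (γ.cast hx hy))) :
      P x y (.mk γ) := by
    subst hx hy
    exact h
  exact of_cast _ _ _ _ whole

theorem pathClass_mk_eq_of_isSimplyConnected {U : Set Y} (hU : IsSimplyConnected U) {x y : Y}
    {p q : Path x y} (hp : ∀ t, p t ∈ U) (hq : ∀ t, q t ∈ U) :
    Homotopic.Quotient.mk p = Homotopic.Quotient.mk q := by
  have := hU.simplyConnectedSpace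
  have hx : x ∈ U := p.source ▸ hp 0
  have hy : y ∈ U := p.target ▸ hp 1
  let lift (r : Path x y) (hr : ∀ t, r t ∈ U) : Path (⟨x, hx⟩ : U) ⟨y, hy⟩ :=
    { toFun := fun t ↦ ⟨r t, hr t⟩, source' := by simp, target' := by simp }
  have homotopic := SimplyConnectedSpace.paths_homotopic (lift p hp) (lift q hq)
  exact Homotopic.Quotient.eq.2 (homotopic.map ⟨Subtype.val, continuous_subtype_val⟩)

end PathClasses

/-! ### Monodromy of a cover by two simply connected sets -/

/-- A van Kampen situation: a cover of `Y` by two simply connected open sets, with a labelling by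
`J` of the path components of their intersection. Only the values of `label` on the intersection
matter. -/
structure LabelledCover (Y J : Type*) [TopologicalSpace Y] where
  U : Bool → Set Y
  isOpen : ∀ i, IsOpen (U i)
  iUnion_eq_univ : ⋃ i, U i = Set.univ
  isSimplyConnected : ∀ i, IsSimplyConnected (U i)
  label : Y → J
  eventually_label_eq : ∀ y ∈ ⋂ i, U i, ∀ᶠ y' in 𝓝 y, label y' = label y
  joinedIn : ∀ y ∈ ⋂ i, U i, ∀ y' ∈ ⋂ i, U i, label y = label y' → JoinedIn (⋂ i, U i) y y'

namespace LabelledCover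

open Path

variable {Y J : Type*} [TopologicalSpace Y] (V : LabelledCover Y J)

/-- The intersection of the two sets of the cover. -/
def overlap : Set Y := ⋂ i, V.U i

variable {V} in
theorem mem_U_of_mem_overlap {y : Y} (hy : y ∈ V.overlap) (i : Bool) : y ∈ V.U i :=
  Set.mem_iInter.1 hy i

variable {V} in
theorem mem_overlap_of_ne {i j : Bool} (hij : i ≠ j) {y : Y} (hi : y ∈ V.U i) (hj : y ∈ V.U j) :
    y ∈ V.overlap := by
  refine Set.mem_iInter.2 fun l ↦ ?_
  obtain rfl | rfl : l = i ∨ l = j := by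
    cases l <;> cases i <;> cases j <;> simp_all
  · exact hi
  · exact hj

theorem exists_mem_U (y : Y) : ∃ i, y ∈ V.U i :=
  Set.mem_iUnion.1 (V.iUnion_eq_univ ▸ Set.mem_univ y)

/-- The cocycle `U i ∩ U j → FreeGroup J` which reads off the label of a point of the overlap. -/
def transition (i j : Bool) (y : Y) : FreeGroup J :=
  if i = j then 1 else if i then FreeGroup.of (V.label y) else (FreeGroup.of (V.label y))⁻¹

theorem transition_self (i : Bool) (y : Y) : V.transition i i y = 1 :=
  if_pos rfl

theorem transition_mul_transition (i j k : Bool) (y : Y) :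
    V.transition j k y * V.transition i j y = V.transition i k y := by
  cases i <;> cases j <;> cases k <;> simp [transition]

theorem eventually_transition_eq (i j : Bool) {y : Y} (hi : y ∈ V.U i) (hj : y ∈ V.U j) :
    ∀ᶠ y' in 𝓝 y, V.transition i j y' = V.transition i j y := by
  by_cases hij : i = j
  · simp [transition, hij]
  · filter_upwards [V.eventually_label_eq y (mem_overlap_of_ne hij hi hj)] with y' hy'
    simp only [transition, hy']

local instance : TopologicalSpace (FreeGroup J) := ⊥

local instance : DiscreteTopology (FreeGroup J) := ⟨rfl⟩

/-- The bundle over `Y` with discrete fibre `FreeGroup J` glued from the cover by the left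
translations by `transition`. -/
noncomputable def bundleCore : FiberBundleCore Bool Y (FreeGroup J) where
  baseSet := V.U
  isOpen_baseSet := V.isOpen
  indexAt y := (V.exists_mem_U y).choose
  mem_baseSet_at y := (V.exists_mem_U y).choose_spec
  coordChange i j y h := V.transition i j y * h
  coordChange_self i y _ h := by rw [transition_self, one_mul]
  continuousOn_coordChange i j := by
    rintro ⟨y, h⟩ ⟨hy, -⟩
    have locally_constant : ∀ᶠ p : Y × FreeGroup J in 𝓝 (y, h),
        V.transition i j y * p.2 = V.transition i j p.1 * p.2 :=
      ((V.eventually_transition_eq i j hy.1 hy.2).prod_inl_nhds h).mono fun p hp ↦ by rw [hp]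
    exact ((continuous_of_discreteTopology.comp continuous_snd).continuousAt.congr
      locally_constant).continuousWithinAt
  coordChange_comp i j k y _ h := by rw [← mul_assoc, transition_mul_transition]

theorem isCoveringMap_proj : IsCoveringMap V.bundleCore.proj :=
  FiberBundle.isCoveringMap (E := V.bundleCore.Fiber)

/-- The point of the fibre over `y` with coordinate `h` in the chart `i` of `bundleCore`. -/
noncomputable def fiberPoint (i : Bool) (y : Y) (h : FreeGroup J) : V.bundleCore.proj ⁻¹' {y} :=
  ⟨⟨y, V.transition i (V.bundleCore.indexAt y) y * h⟩, rfl⟩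

theorem fiberPoint_injective (i : Bool) (y : Y) : Function.Injective (V.fiberPoint i y) := by
  intro h h' e
  have heq := (Bundle.TotalSpace.mk.inj (congrArg Subtype.val e)).2
  exact mul_left_cancel (eq_of_heq heq)

theorem fiberPoint_change (i j : Bool) (y : Y) (h : FreeGroup J) :
    V.fiberPoint i y h = V.fiberPoint j y (V.transition i j y * h) := by
  refine Subtype.ext ?_
  simp only [fiberPoint]
  rw [← mul_assoc, transition_mul_transition]

theorem monodromy_fiberPoint {i : Bool} {x y : Y} {q : Path x y} (hq : ∀ t, q t ∈ V.U i)
    (h : FreeGroup J) :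
    V.isCoveringMap_proj.monodromy (.mk q) (V.fiberPoint i x h) = V.fiberPoint i y h := by
  have val_congr {x' x : Y} (hx : x' = x) : (V.fiberPoint i x' h).1 = (V.fiberPoint i x h).1 := by
    rw [hx]
  have lift_eq : (fun t ↦ (V.fiberPoint i (q t) h).1) =
      V.isCoveringMap_proj.liftPath q (V.fiberPoint i x h).1 (q.source.trans rfl) := by
    refine (V.isCoveringMap_proj.eq_liftPath_iff _).2 ⟨?_, rfl, val_congr q.source⟩
    exact (V.bundleCore.localTriv i).continuousOn_invFun.comp_continuous
      (f := fun t ↦ (q t, h)) (by fun_prop) fun t ↦ (V.bundleCore.mem_localTriv_target i _).2 (hq t)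
  exact Subtype.ext ((congrFun lift_eq 1).symm.trans (val_congr q.target))

variable {V} {b : Y} (hb : b ∈ V.overlap)

/-- A path from the base point `b` to `z` inside `U i`. -/
noncomputable def spokePath {i : Bool} {z : Y} (hz : z ∈ V.U i) : Path b z :=
  ((V.isSimplyConnected i).isPathConnected.joinedIn b (mem_U_of_mem_overlap hb i) z hz).somePath

theorem spokePath_mem {i : Bool} {z : Y} (hz : z ∈ V.U i) (t : I) : spokePath hb hz t ∈ V.U i :=
  JoinedIn.somePath_mem _ t

/-- The class of the paths from the base point `b` to `z` inside `U i`. -/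
noncomputable def spoke {i : Bool} {z : Y} (hz : z ∈ V.U i) : Homotopic.Quotient b z :=
  .mk (spokePath hb hz)

theorem spoke_trans_mk {i : Bool} {z z' : Y} (hz : z ∈ V.U i) (hz' : z' ∈ V.U i) {q : Path z z'}
    (hq : ∀ t, q t ∈ V.U i) : (spoke hb hz).trans (.mk q) = spoke hb hz' := by
  refine pathClass_mk_eq_of_isSimplyConnected (V.isSimplyConnected i) (fun t ↦ ?_)
    (spokePath_mem hb hz')
  have hrange : Set.range ((spokePath hb hz).trans q) ⊆ V.U i := by
    rw [Path.trans_range]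
    exact Set.union_subset (Set.range_subset_iff.2 (spokePath_mem hb hz))
      (Set.range_subset_iff.2 hq)
  exact hrange ⟨t, rfl⟩

theorem spoke_self (i : Bool) :
    spoke hb (mem_U_of_mem_overlap hb i) = Homotopic.Quotient.refl b :=
  pathClass_mk_eq_of_isSimplyConnected (V.isSimplyConnected i) (spokePath_mem hb _)
    fun _ ↦ mem_U_of_mem_overlap hb i

/-- The loop that reaches `z` through `U true` and returns through `U false`. -/
noncomputable def loop {z : Y} (hz : z ∈ V.overlap) : FundamentalGroup Y b :=
  .fromPath ((spoke hb (mem_U_of_mem_overlap hz true)).trans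
    (spoke hb (mem_U_of_mem_overlap hz false)).symm)

theorem loop_eq_of_label_eq {z z' : Y} (hz : z ∈ V.overlap) (hz' : z' ∈ V.overlap)
    (h : V.label z = V.label z') : loop hb hz = loop hb hz' := by
  obtain ⟨q, hq⟩ := V.joinedIn z hz z' hz' h
  have spoke_eq (i : Bool) : spoke hb (mem_U_of_mem_overlap hz' i) =
      (spoke hb (mem_U_of_mem_overlap hz i)).trans (.mk q) :=
    (spoke_trans_mk hb _ _ fun t ↦ mem_U_of_mem_overlap (hq t) i).symm
  simp only [loop, spoke_eq]
  induction spoke hb (mem_U_of_mem_overlap hz false) using Homotopic.Quotient.ind with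
  | mk p =>
    rw [← Homotopic.Quotient.mk_trans, ← Homotopic.Quotient.mk_symm, ← Homotopic.Quotient.mk_symm,
      Path.trans_symm, Homotopic.Quotient.mk_trans, Homotopic.Quotient.mk_symm q,
      Homotopic.Quotient.trans_assoc, ← Homotopic.Quotient.trans_assoc (.mk q),
      Homotopic.Quotient.trans_symm, Homotopic.Quotient.refl_trans]

open Classical in
/-- The homomorphism sending a generator to the loop through the points of that label, and to `1`
if the label does not occur on the overlap. -/
noncomputable def ofFreeGroup : FreeGroup J →* FundamentalGroup Y b :=
  FreeGroup.lift fun j ↦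
    if h : ∃ z, ∃ _ : z ∈ V.overlap, V.label z = j then loop hb h.choose_spec.choose else 1

theorem ofFreeGroup_of {z : Y} (hz : z ∈ V.overlap) :
    ofFreeGroup hb (FreeGroup.of (V.label z)) = loop hb hz := by
  have h : ∃ z', ∃ _ : z' ∈ V.overlap, V.label z' = V.label z := ⟨z, hz, rfl⟩
  rw [ofFreeGroup, FreeGroup.lift_apply_of, dif_pos h]
  exact loop_eq_of_label_eq hb _ hz h.choose_spec.choose_spec

theorem loop_trans_spoke {z : Y} (hz : z ∈ V.overlap) :
    (loop hb hz).toPath.trans (spoke hb (mem_U_of_mem_overlap hz false)) =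
      spoke hb (mem_U_of_mem_overlap hz true) := by
  change ((spoke hb _).trans (spoke hb _).symm).trans _ = _
  rw [Homotopic.Quotient.trans_assoc, Homotopic.Quotient.symm_trans, Homotopic.Quotient.trans_refl]

theorem ofFreeGroup_mul (g g' : FreeGroup J) : (ofFreeGroup hb (g * g')).toPath =
    (ofFreeGroup hb g').toPath.trans (ofFreeGroup hb g).toPath := by
  rw [map_mul]
  rfl

theorem ofFreeGroup_transition_trans_spoke {i j : Bool} {z : Y} (hi : z ∈ V.U i) (hj : z ∈ V.U j) :
    (ofFreeGroup hb (V.transition i j z)).toPath.trans (spoke hb hj) = spoke hb hi := by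
  by_cases hij : i = j
  · subst hij
    rw [transition_self, map_one]
    exact Homotopic.Quotient.refl_trans _
  have hz := mem_overlap_of_ne hij hi hj
  match i, j with
  | true, false =>
    simpa [transition, ofFreeGroup_of hb hz] using loop_trans_spoke hb hz
  | false, true =>
    rw [← loop_trans_spoke hb hz, ← Homotopic.Quotient.trans_assoc, ← ofFreeGroup_of hb hz,
      ← ofFreeGroup_mul]
    simp only [transition, Bool.false_eq_true, if_false, mul_inv_cancel, map_one]
    exact Homotopic.Quotient.refl_trans _

/-- The free group element `g` describes the path class `q`, seen from the charts `i` and `j` at its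
ends: `g` is the monodromy of `q`, and closing `q` up by spokes gives the loop described by `g`. -/
def Represents {i j : Bool} {z z' : Y} (hi : z ∈ V.U i) (hj : z' ∈ V.U j)
    (q : Homotopic.Quotient z z') (g : FreeGroup J) : Prop :=
  (∀ h, V.isCoveringMap_proj.monodromy q (V.fiberPoint i z h) = V.fiberPoint j z' (g * h)) ∧
    (spoke hb hi).trans q = (ofFreeGroup hb g).toPath.trans (spoke hb hj)

theorem represents_mk {i j l : Bool} {z z' : Y} (hi : z ∈ V.U i) (hj : z' ∈ V.U j) {q : Path z z'}
    (hq : ∀ t, q t ∈ V.U l) :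
    Represents hb hi hj (.mk q) (V.transition l j z' * V.transition i l z) := by
  have hl : z ∈ V.U l := q.source ▸ hq 0
  have hl' : z' ∈ V.U l := q.target ▸ hq 1
  refine ⟨fun h ↦ ?_, ?_⟩
  · rw [V.fiberPoint_change i l, V.monodromy_fiberPoint hq, V.fiberPoint_change l j, mul_assoc]
  · rw [ofFreeGroup_mul, Homotopic.Quotient.trans_assoc,
      ofFreeGroup_transition_trans_spoke hb hl' hj, ← spoke_trans_mk hb hl hl' hq,
      ← Homotopic.Quotient.trans_assoc, ofFreeGroup_transition_trans_spoke hb hi hl]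

variable {hb} in
theorem Represents.trans {i j l : Bool} {x y z : Y} {hi : x ∈ V.U i} {hl : y ∈ V.U l}
    {hj : z ∈ V.U j} {p : Homotopic.Quotient x y} {q : Homotopic.Quotient y z} {g g' : FreeGroup J}
    (hp : Represents hb hi hl p g) (hq : Represents hb hl hj q g') :
    Represents hb hi hj (p.trans q) (g' * g) := by
  refine ⟨fun h ↦ ?_, ?_⟩
  · rw [V.isCoveringMap_proj.monodromy_trans_apply, hp.1, hq.1, mul_assoc]
  · rw [← Homotopic.Quotient.trans_assoc, hp.2, Homotopic.Quotient.trans_assoc, hq.2,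
      ofFreeGroup_mul, Homotopic.Quotient.trans_assoc]

theorem exists_represents {i j : Bool} {z z' : Y} (hi : z ∈ V.U i) (hj : z' ∈ V.U j)
    (q : Homotopic.Quotient z z') : ∃ g, Represents hb hi hj q g := by
  revert i j
  refine pathClass_induction (P := fun z z' q ↦ ∀ {i j} (hi : z ∈ V.U i) (hj : z' ∈ V.U j),
    ∃ g, Represents hb hi hj q g) V.isOpen V.iUnion_eq_univ ?_ ?_ q
  · intro l z z' q hq i j hi hj
    exact ⟨_, represents_mk hb hi hj hq⟩
  · intro x y z p q hp hq i j hi hj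
    obtain ⟨l, hl⟩ := V.exists_mem_U y
    obtain ⟨g, hg⟩ := hp hi hl
    obtain ⟨g', hg'⟩ := hq hl hj
    exact ⟨g' * g, hg.trans hg'⟩

variable {hb} in
theorem Represents.eq {i j : Bool} {z z' : Y} {hi : z ∈ V.U i} {hj : z' ∈ V.U j}
    {q : Homotopic.Quotient z z'} {g g' : FreeGroup J} (hg : Represents hb hi hj q g)
    (hg' : Represents hb hi hj q g') : g = g' :=
  mul_right_cancel (V.fiberPoint_injective j z' ((hg.1 1).symm.trans (hg'.1 1)))

theorem exists_represents_loop (γ : FundamentalGroup Y b) :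
    ∃ g, Represents hb (mem_U_of_mem_overlap hb true) (mem_U_of_mem_overlap hb true) γ.toPath g :=
  exists_represents hb _ _ _

/-- The monodromy representation of the fundamental group on the fibre over the base point, as a
homomorphism to `FreeGroup J` acting by left translations in the chart `true`. -/
noncomputable def monodromyHom : FundamentalGroup Y b →* FreeGroup J :=
  .mk' (fun γ ↦ (exists_represents_loop hb γ).choose) fun γ γ' ↦
    (exists_represents_loop hb (γ * γ')).choose_spec.eq
      ((exists_represents_loop hb γ').choose_spec.trans (exists_represents_loop hb γ).choose_spec)

theorem represents_monodromyHom (γ : FundamentalGroup Y b) :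
    Represents hb (mem_U_of_mem_overlap hb true) (mem_U_of_mem_overlap hb true) γ.toPath
      (monodromyHom hb γ) :=
  (exists_represents_loop hb γ).choose_spec

theorem ofFreeGroup_monodromyHom (γ : FundamentalGroup Y b) :
    ofFreeGroup hb (monodromyHom hb γ) = γ := by
  have h := (represents_monodromyHom hb γ).2
  rw [spoke_self, Homotopic.Quotient.refl_trans, Homotopic.Quotient.trans_refl] at h
  exact h.symm

theorem monodromyHom_injective : Function.Injective (monodromyHom hb) :=
  Function.LeftInverse.injective (ofFreeGroup_monodromyHom hb)

theorem monodromyHom_loop {z : Y} (hz : z ∈ V.overlap) :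
    monodromyHom hb (loop hb hz) = (FreeGroup.of (V.label b))⁻¹ * FreeGroup.of (V.label z) := by
  have outward := represents_mk hb (mem_U_of_mem_overlap hb true) (mem_U_of_mem_overlap hz false)
    (spokePath_mem hb (mem_U_of_mem_overlap hz true))
  have back := represents_mk hb (mem_U_of_mem_overlap hz false) (mem_U_of_mem_overlap hb true)
    (q := (spokePath hb (mem_U_of_mem_overlap hz false)).symm) fun t ↦ spokePath_mem hb _ _
  have h := (represents_monodromyHom hb (loop hb hz)).eq (outward.trans back)
  simpa [transition] using h

theorem not_commute_loop {z z' : Y} (hz : z ∈ V.overlap) (hz' : z' ∈ V.overlap)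
    (hbz : V.label b ≠ V.label z) (hbz' : V.label b ≠ V.label z') (hzz' : V.label z ≠ V.label z') :
    ¬ Commute (loop hb hz) (loop hb hz') := by
  intro h
  have himage := h.map (monodromyHom hb)
  rw [monodromyHom_loop, monodromyHom_loop] at himage
  exact freeGroup_not_commute hbz hbz' hzz' himage

theorem eq_one_of_pow_mem_center (hb : b ∈ V.overlap) {z z' : Y} (hz : z ∈ V.overlap)
    (hz' : z' ∈ V.overlap) (hbz : V.label b ≠ V.label z)
    (hbz' : V.label b ≠ V.label z') (hzz' : V.label z ≠ V.label z')
    {γ : FundamentalGroup Y b} {k : ℕ} (hk : k ≠ 0)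
    (hγ : γ ^ k ∈ Subgroup.center (FundamentalGroup Y b)) : γ = 1 := by
  have := isFreeGroup_of_injective (monodromyHom_injective hb)
  exact isFreeGroup_eq_one_of_pow_mem_center (not_commute_loop hb hz hz' hbz hbz' hzz') hk hγ

end LabelledCover

/-! ### The fundamental group of a punctured plane -/

section PuncturedPlane

theorem contractibleSpace_of_id_homotopic_comp {X Z : Type*} [TopologicalSpace X]
    [TopologicalSpace Z] [ContractibleSpace Z] {p : C(X, Z)} {q : C(Z, X)}
    (h : (ContinuousMap.id X).Homotopic (q.comp p)) : ContractibleSpace X := by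
  obtain ⟨x, hx⟩ := ((id_nullhomotopic Z).comp_left p).comp_right q
  exact (contractible_iff_id_nullhomotopic X).2 ⟨x, h.trans hx⟩

/-- The complement of the closed vertical rays that issue from the points of `B`, downwards if
`0 < ε` and upwards if `ε < 0`. -/
def slitPlane (ε : ℝ) (B : Set (ℝ × ℝ)) : Set (ℝ × ℝ) :=
  {z | ∀ b ∈ B, z.1 = b.1 → ε * b.2 < ε * z.2}

variable {ε : ℝ} {B : Set (ℝ × ℝ)}

theorem slitPlane_subset_compl : slitPlane ε B ⊆ Bᶜ :=
  fun z hz hzB ↦ lt_irrefl _ (hz z hzB rfl)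

theorem isOpen_slitPlane (hB : B.Finite) : IsOpen (slitPlane ε B) := by
  have : slitPlane ε B = ⋂ b ∈ B, {z | z.1 ≠ b.1} ∪ {z | ε * b.2 < ε * z.2} := by
    ext z
    simp only [slitPlane, Set.mem_ofPred_eq, Set.mem_iInter, Set.mem_union, ne_eq, imp_iff_not_or]
  rw [this]
  exact hB.isOpen_biInter fun b _ ↦ (isOpen_ne_fun continuous_fst continuous_const).union
    (isOpen_lt continuous_const (by fun_prop))

theorem isSimplyConnected_slitPlane (hε : ε ≠ 0) (hB : B.Finite) :
    IsSimplyConnected (slitPlane ε B) := by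
  obtain ⟨m, hm⟩ := (hB.image fun b ↦ ε * b.2).bddAbove
  let M := max m 0 + 1
  let C : Set (ℝ × ℝ) := {z | M ≤ ε * z.2}
  have mem_slitPlane_of_mem {z : ℝ × ℝ} (hz : z ∈ C) : z ∈ slitPlane ε B := fun b hb _ ↦
    (((hm ⟨b, hb, rfl⟩).trans (le_max_left m 0)).trans_lt (lt_add_one _)).trans_le hz
  have : ContractibleSpace C := by
    refine Convex.contractibleSpace (convex_halfSpace_ge ?_ M) ⟨(0, M / ε), ?_⟩
    · exact (LinearMap.lsmul ℝ ℝ ε ∘ₗ LinearMap.snd ℝ ℝ ℝ).isLinear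
    · exact (mul_div_cancel₀ M hε).ge
  let push (t : ℝ) (z : ℝ × ℝ) : ℝ × ℝ := (z.1, z.2 + ε⁻¹ * (t * (M + |ε * z.2|)))
  have mul_push_snd (t : ℝ) (z : ℝ × ℝ) :
      ε * (push t z).2 = ε * z.2 + t * (M + |ε * z.2|) := by
    simp only [push]
    field_simp
  have push_mem {t : ℝ} (ht : 0 ≤ t) {z : ℝ × ℝ} (hz : z ∈ slitPlane ε B) :
      push t z ∈ slitPlane ε B := by
    intro b hb h
    rw [mul_push_snd]
    exact (hz b hb h).trans_le (le_add_of_nonneg_right (by positivity))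
  have push_one_mem (z : ℝ × ℝ) : push 1 z ∈ C := by
    change M ≤ ε * (push 1 z).2
    rw [mul_push_snd]
    linarith [neg_abs_le (ε * z.2)]
  have homotopic : (ContinuousMap.id (slitPlane ε B)).Homotopic
      (ContinuousMap.comp ⟨fun z : C ↦ ⟨z, mem_slitPlane_of_mem z.2⟩, by fun_prop⟩
        ⟨fun z ↦ ⟨push 1 z, push_one_mem z⟩, by fun_prop⟩) :=
    ⟨{ toFun := fun p ↦ ⟨push p.1 p.2, push_mem p.1.2.1 p.2.2⟩
       map_zero_left := fun z ↦ Subtype.ext (by simp [push])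
       map_one_left := fun z ↦ rfl }⟩
  have := contractibleSpace_of_id_homotopic_comp homotopic
  exact inferInstanceAs (SimplyConnectedSpace (slitPlane ε B))

/-- The sign of the direction associated with a set of `slitCover`. -/
def slitSign (i : Bool) : ℝ := if i then 1 else -1

theorem iInter_slitPlane : ⋂ i, slitPlane (slitSign i) B = {z | ∀ b ∈ B, z.1 ≠ b.1} := by
  ext z
  simp only [slitPlane, slitSign, Set.mem_iInter, Set.mem_ofPred_eq, Bool.forall_bool]
  refine ⟨fun h b hb hz ↦ ?_, fun h ↦ ⟨fun b hb hz ↦ absurd hz (h b hb),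
    fun b hb hz ↦ absurd hz (h b hb)⟩⟩
  have := h.1 b hb hz
  have := h.2 b hb hz
  grind

theorem iUnion_slitPlane (hB : Set.InjOn Prod.fst B) :
    ⋃ i, slitPlane (slitSign i) B = Bᶜ := by
  refine (Set.iUnion_subset fun i ↦ slitPlane_subset_compl).antisymm fun z hz ↦ ?_
  by_cases h : ∃ b ∈ B, z.1 = b.1
  · obtain ⟨b, hb, hzb⟩ := h
    have mem_of_lt {i : Bool} (hi : slitSign i * b.2 < slitSign i * z.2) :
        z ∈ slitPlane (slitSign i) B := by
      intro b' hb' hzb'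
      rwa [← hB hb hb' (hzb.symm.trans hzb')]
    have hne : z.2 ≠ b.2 := fun h2 ↦ hz (Prod.ext hzb h2 ▸ hb)
    obtain hlt | hgt := hne.lt_or_gt
    · exact Set.mem_iUnion.2 ⟨false, mem_of_lt (by simpa [slitSign] using hlt)⟩
    · exact Set.mem_iUnion.2 ⟨true, mem_of_lt (by simpa [slitSign] using hgt)⟩
  · exact Set.mem_iUnion.2 ⟨true, fun b hb hzb ↦ absurd ⟨b, hb, hzb⟩ h⟩

theorem eventually_lt_fst_iff (hB : B.Finite) {z : ℝ × ℝ} (hz : ∀ b ∈ B, z.1 ≠ b.1) :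
    ∀ᶠ z' in 𝓝 z, {b ∈ B | b.1 < z'.1} = {b ∈ B | b.1 < z.1} := by
  have : ∀ᶠ z' in 𝓝 z, ∀ b ∈ B, (b.1 < z'.1 ↔ b.1 < z.1) := by
    refine (Filter.eventually_all_finite hB).2 fun b hb ↦ ?_
    obtain h | h := (hz b hb).lt_or_gt
    · filter_upwards [continuous_fst.continuousAt.eventually (gt_mem_nhds h)] with z' h'
      exact iff_of_false h'.not_gt h.not_gt
    · filter_upwards [continuous_fst.continuousAt.eventually (lt_mem_nhds h)] with z' h'
      exact iff_of_true h' h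
  filter_upwards [this] with z' h
  exact Set.ext fun b ↦ and_congr_right (h b)

theorem joinedIn_of_lt_fst_iff {z z' : ℝ × ℝ} (hz : ∀ b ∈ B, z.1 ≠ b.1) (hz' : ∀ b ∈ B, z'.1 ≠ b.1)
    (h : {b ∈ B | b.1 < z.1} = {b ∈ B | b.1 < z'.1}) :
    JoinedIn {z | ∀ b ∈ B, z.1 ≠ b.1} z z' := by
  refine JoinedIn.of_segment_subset fun w hw b hb hwb ↦ ?_
  have same_side : b.1 < z.1 ↔ b.1 < z'.1 := by
    simpa [hb] using Set.ext_iff.1 h b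
  have hw1 : w.1 ∈ Set.uIcc z.1 z'.1 :=
    segment_eq_uIcc z.1 z'.1 ▸ (Prod.segment_subset z z' hw).1
  have := hz b hb
  have := hz' b hb
  rw [hwb, Set.mem_uIcc] at hw1
  grind

variable {Y : Type*} [TopologicalSpace Y] {j : Y → ℝ × ℝ}

/-- The cover of a punctured plane, embedded as `Bᶜ` by `j`, by the complements of the downward and
of the upward rays from the punctures. A point which is on no vertical line through a puncture is
labelled by the set of the punctures to the left of it. -/
def slitCover (hj : IsEmbedding j) (hB : B.Finite) (hBinj : Set.InjOn Prod.fst B)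
    (hrange : Set.range j = Bᶜ) : LabelledCover Y (Set (ℝ × ℝ)) where
  U i := j ⁻¹' slitPlane (slitSign i) B
  isOpen i := (isOpen_slitPlane hB).preimage hj.continuous
  iUnion_eq_univ := by
    rw [← Set.preimage_iUnion, iUnion_slitPlane hBinj, ← hrange, Set.preimage_range]
  isSimplyConnected i := by
    rw [← hj.isSimplyConnected_image,
      Set.image_preimage_eq_of_subset (hrange ▸ slitPlane_subset_compl)]
    exact isSimplyConnected_slitPlane (by cases i <;> simp [slitSign]) hB
  label y := {b ∈ B | b.1 < (j y).1}
  eventually_label_eq y hy := by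
    rw [← Set.preimage_iInter, iInter_slitPlane] at hy
    exact hj.continuous.continuousAt.eventually (eventually_lt_fst_iff hB hy)
  joinedIn y hy y' hy' h := by
    rw [← hj.isInducing.joinedIn_image hy hy', ← Set.preimage_iInter,
      Set.image_preimage_eq_of_subset]
    · rw [← Set.preimage_iInter, iInter_slitPlane] at hy hy'
      rw [iInter_slitPlane]
      exact joinedIn_of_lt_fst_iff hy hy' h
    · exact hrange ▸ (Set.iInter_subset _ true).trans slitPlane_subset_compl

theorem exists_mem_overlap_slitCover (hj : IsEmbedding j) (hB : B.Finite)
    (hBinj : Set.InjOn Prod.fst B) (hrange : Set.range j = Bᶜ) {c : ℝ} (hc : c ∉ Prod.fst '' B) :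
    ∃ y ∈ (slitCover hj hB hBinj hrange).overlap,
      (slitCover hj hB hBinj hrange).label y = {b ∈ B | b.1 < c} := by
  have hne : ∀ b ∈ B, c ≠ b.1 := fun b hb h ↦ hc ⟨b, hb, h.symm⟩
  obtain ⟨y, hy⟩ : (c, 0) ∈ Set.range j := hrange ▸ fun h ↦ hne _ h rfl
  refine ⟨y, ?_, by simp only [slitCover, hy]⟩
  change y ∈ ⋂ i, j ⁻¹' slitPlane (slitSign i) B
  rw [← Set.preimage_iInter, iInter_slitPlane, Set.mem_preimage, hy]
  exact hne

theorem exists_separating_triple {S : Set ℝ} (hS : S.Finite) (hS2 : S.Nontrivial) :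
    ∃ c₀ ∉ S, ∃ c₁ ∉ S, ∃ c₂ ∉ S, (∃ s ∈ S, s ∈ Set.Ioo c₀ c₁) ∧ ∃ s ∈ S, s ∈ Set.Ioo c₁ c₂ := by
  obtain ⟨s, hs, s', hs', hlt⟩ := hS2.exists_lt
  obtain ⟨c₀, hc₀, hc₀S⟩ := (Set.Iio_infinite s).exists_notMem_finite hS
  obtain ⟨c₁, hc₁, hc₁S⟩ := (Set.Ioo_infinite hlt).exists_notMem_finite hS
  obtain ⟨c₂, hc₂, hc₂S⟩ := (Set.Ioi_infinite s').exists_notMem_finite hS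
  exact ⟨c₀, hc₀S, c₁, hc₁S, c₂, hc₂S, ⟨s, hs, hc₀, hc₁.1⟩, s', hs', hc₁.2, hc₂⟩

theorem sep_fst_lt_ne {c c' : ℝ} (hcc' : ∃ s ∈ Prod.fst '' B, s ∈ Set.Ico c c') :
    {b ∈ B | b.1 < c} ≠ {b ∈ B | b.1 < c'} := by
  obtain ⟨_, ⟨b, hb, rfl⟩, hcb, hbc'⟩ := hcc'
  intro h
  exact hcb.not_gt (h.symm.subset ⟨hb, hbc'⟩).2

theorem eq_one_of_pow_mem_center_of_injOn_fst (hj : IsEmbedding j) (hB : B.Finite)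
    (hB2 : B.Nontrivial) (hBinj : Set.InjOn Prod.fst B) (hrange : Set.range j = Bᶜ) {y : Y}
    {γ : FundamentalGroup Y y} {k : ℕ} (hk : k ≠ 0)
    (hγ : γ ^ k ∈ Subgroup.center (FundamentalGroup Y y)) : γ = 1 := by
  let V := slitCover hj hB hBinj hrange
  obtain ⟨c₀, hc₀, c₁, hc₁, c₂, hc₂, ⟨s, hs, h₀₁⟩, s', hs', h₁₂⟩ :=
    exists_separating_triple (hB.image Prod.fst) (hB2.image_of_injOn hBinj)
  obtain ⟨y₀, hy₀, label₀⟩ := exists_mem_overlap_slitCover hj hB hBinj hrange hc₀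
  obtain ⟨y₁, hy₁, label₁⟩ := exists_mem_overlap_slitCover hj hB hBinj hrange hc₁
  obtain ⟨y₂, hy₂, label₂⟩ := exists_mem_overlap_slitCover hj hB hBinj hrange hc₂
  obtain ⟨i, hyi⟩ := V.exists_mem_U y
  obtain ⟨q, -⟩ := (V.isSimplyConnected i).isPathConnected.joinedIn y hyi y₀
    (LabelledCover.mem_U_of_mem_overlap hy₀ i)
  let e := FundamentalGroup.fundamentalGroupMulEquivOfPath q
  refine e.map_eq_one_iff.1 (V.eq_one_of_pow_mem_center hy₀ hy₁ hy₂ ?_ ?_ ?_ hk ?_)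
  · rw [label₀, label₁]
    exact sep_fst_lt_ne ⟨s, hs, h₀₁.1.le, h₀₁.2⟩
  · rw [label₀, label₂]
    exact sep_fst_lt_ne ⟨s, hs, h₀₁.1.le, h₀₁.2.trans (h₁₂.1.trans h₁₂.2)⟩
  · rw [label₁, label₂]
    exact sep_fst_lt_ne ⟨s', hs', h₁₂.1.le, h₁₂.2⟩
  · rw [← map_pow]
    exact MulEquivClass.apply_mem_center e hγ

/-- The shear of the plane that makes the lines of slope `1 / s` vertical. -/
def shear (s : ℝ) : ℂ ≃ₜ ℝ × ℝ where
  toFun z := (z.re - s * z.im, z.im)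
  invFun p := (p.1 + s * p.2 : ℝ) + p.2 * Complex.I
  left_inv z := Complex.ext (by simp) (by simp)
  right_inv p := Prod.ext (by simp) (by simp)
  continuous_toFun := by fun_prop
  continuous_invFun := by fun_prop

theorem exists_injOn_fst_shear {A : Set ℂ} (hA : A.Finite) :
    ∃ s, Set.InjOn (fun z ↦ (shear s z).1) A := by
  let slope (p : ℂ × ℂ) : ℝ := (p.1.re - p.2.re) / (p.1.im - p.2.im)
  obtain ⟨s, hs⟩ := ((hA.prod hA).image slope).infinite_compl.nonempty
  refine ⟨s, fun a ha b hb (hab : a.re - s * a.im = b.re - s * b.im) ↦ ?_⟩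
  have him : a.im = b.im := by
    by_contra him
    refine hs ⟨(a, b), ⟨ha, hb⟩, (div_eq_iff (sub_ne_zero.2 him)).2 ?_⟩
    linear_combination hab
  rw [him] at hab
  exact Complex.ext (by linarith) him

theorem eq_one_of_pow_mem_center_puncturedPlane {j : Y → ℂ} (hj : IsEmbedding j) {A : Set ℂ}
    (hA : A.Finite) (hA2 : A.Nontrivial) (hrange : Set.range j = Aᶜ) {y : Y}
    {γ : FundamentalGroup Y y} {k : ℕ} (hk : k ≠ 0)
    (hγ : γ ^ k ∈ Subgroup.center (FundamentalGroup Y y)) : γ = 1 := by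
  obtain ⟨s, hs⟩ := exists_injOn_fst_shear hA
  refine eq_one_of_pow_mem_center_of_injOn_fst ((shear s).isEmbedding.comp hj)
    (hA.image (shear s)) (hA2.image (shear s).injective) hs.image_of_comp ?_ hk hγ
  rw [Set.range_comp, hrange, Set.image_compl_eq (shear s).bijective]

end PuncturedPlane

/-! ### The trace of a fixed point under a homotopy -/

section Trace

open Path

variable {Y : Type*} [TopologicalSpace Y] {f : C(Y, Y)} {p : Y}

/-- The class of the loop run through by a fixed point `p` of `f` under a homotopy from the identity
to `f`. -/
def traceClass (H : (ContinuousMap.id Y).Homotopy f) (hp : f p = p) : FundamentalGroup Y p :=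
  .fromPath (.mk ((H.evalAt p).cast rfl hp.symm))

theorem mapOfEq_mk (hp : f p = p) (δ : Path p p) :
    FundamentalGroup.mapOfEq f hp (.fromPath (.mk δ)) =
      .fromPath (.mk ((δ.map f.continuous).cast hp.symm hp.symm)) :=
  FundamentalGroup.mapOfEq_apply f hp _

theorem traceClass_mul (H : (ContinuousMap.id Y).Homotopy f) (hp : f p = p)
    (x : FundamentalGroup Y p) :
    traceClass H hp * x = FundamentalGroup.mapOfEq f hp x * traceClass H hp := by
  obtain ⟨δ, rfl⟩ := Homotopic.Quotient.mk_surjective x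
  obtain ⟨G⟩ := Homotopic.map_trans_evalAt H δ
  rw [mapOfEq_mk, traceClass]
  change Homotopic.Quotient.mk (δ.trans _) =
    Homotopic.Quotient.mk (Path.trans _ ((δ.map f.continuous).cast _ _))
  refine Homotopic.Quotient.eq.2 ⟨(G.pathCast rfl hp.symm).cast ?_ ?_⟩
  · ext t
    exact (Path.trans_apply _ _ t).trans (Path.trans_apply _ _ t).symm
  · ext t
    exact (Path.trans_apply _ _ t).trans (Path.trans_apply _ _ t).symm

theorem mapOfEq_iterate (hp : f p = p) (k : ℕ) (x : FundamentalGroup Y p) :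
    (FundamentalGroup.mapOfEq f hp)^[k] x = FundamentalGroup.mapOfEq
      ⟨f^[k], f.continuous.iterate k⟩ (Function.iterate_fixed hp k) x := by
  obtain ⟨δ, rfl⟩ := Homotopic.Quotient.mk_surjective x
  rw [mapOfEq_mk]
  induction k with
  | zero => rfl
  | succ k ih =>
    rw [Function.iterate_succ_apply', ih, mapOfEq_mk]
    congr 2
    ext t
    exact (Function.iterate_succ_apply' f k (δ t)).symm

theorem traceClass_pow_mul (H : (ContinuousMap.id Y).Homotopy f) (hp : f p = p)
    (x : FundamentalGroup Y p) (k : ℕ) :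
    traceClass H hp ^ k * x = (FundamentalGroup.mapOfEq f hp)^[k] x * traceClass H hp ^ k := by
  induction k with
  | zero => simp
  | succ k ih =>
    rw [pow_succ', mul_assoc, ih, ← mul_assoc, traceClass_mul, mul_assoc,
      Function.iterate_succ_apply']

theorem traceClass_eq_one {H : (ContinuousMap.id Y).Homotopy f} (hH : ∀ t, H (t, p) = p)
    (hp : f p = p) : traceClass H hp = 1 :=
  congrArg (FundamentalGroup.fromPath ∘ Homotopic.Quotient.mk) (Path.ext (funext hH))

theorem traceClass_pow_mem_center (H : (ContinuousMap.id Y).Homotopy f) (hp : f p = p) {k : ℕ}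
    {H' : (ContinuousMap.id Y).Homotopy ⟨f^[k], f.continuous.iterate k⟩}
    (hH' : ∀ t, H' (t, p) = p) :
    traceClass H hp ^ k ∈ Subgroup.center (FundamentalGroup Y p) := by
  refine Subgroup.mem_center_iff.2 fun x ↦ ?_
  have iterate_fixes : (FundamentalGroup.mapOfEq f hp)^[k] x = x := by
    have h := traceClass_mul H' (Function.iterate_fixed hp k) x
    rw [traceClass_eq_one hH', one_mul, mul_one] at h
    rw [mapOfEq_iterate, ← h]
  rw [traceClass_pow_mul, iterate_fixes]

end Trace

/-! ### Isotopies -/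

/-- `H` is an isotopy from the identity to `f` relative to `F`: a named version of the conditions
in `IsotopicToIdRel`, so that the trace `t ↦ H (t, p)` of a point can be followed. -/
structure IsIsotopyRel {X : Type*} [TopologicalSpace X] (H : I × X → X) (f : X → X)
    (F : Set X) : Prop where
  continuous : Continuous H
  isHomeomorph (t : I) : IsHomeomorph fun x ↦ H (t, x)
  map_zero (x : X) : H (0, x) = x
  map_one (x : X) : H (1, x) = f x
  map_of_mem (t : I) {x : X} (hx : x ∈ F) : H (t, x) = x

section Isotopy

variable {X X' Y : Type*} [TopologicalSpace X] [TopologicalSpace X'] [TopologicalSpace Y]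
  {H Φ : I × X → X} {f g : X → X} {F G : Set X}

theorem isotopicToIdRel_iff_exists : IsotopicToIdRel f F ↔ ∃ H, IsIsotopyRel H f F :=
  ⟨fun ⟨H, hc, hh, h0, h1, hF⟩ ↦ ⟨H, hc, hh, h0, h1, fun t _ ↦ hF t _⟩,
    fun ⟨H, h⟩ ↦ ⟨H, h.continuous, h.isHomeomorph, h.map_zero, h.map_one,
      fun t _ hx ↦ h.map_of_mem t hx⟩⟩

namespace IsIsotopyRel

theorem isotopicToIdRel (h : IsIsotopyRel H f F) : IsotopicToIdRel f F :=
  isotopicToIdRel_iff_exists.2 ⟨H, h⟩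

theorem congr_set (h : IsIsotopyRel H f F) (hG : ∀ t, ∀ x ∈ G, H (t, x) = x) :
    IsIsotopyRel H f G :=
  { h with map_of_mem := fun t x hx ↦ hG t x hx }

theorem comp (hΦ : IsIsotopyRel Φ g F) (h : IsIsotopyRel H f F) :
    IsIsotopyRel (fun q ↦ Φ (q.1, H q)) (g ∘ f) F where
  continuous := hΦ.continuous.comp (continuous_fst.prodMk h.continuous)
  isHomeomorph t := (hΦ.isHomeomorph t).comp (h.isHomeomorph t)
  map_zero x := by rw [h.map_zero, hΦ.map_zero]
  map_one x := by rw [h.map_one, hΦ.map_one, Function.comp_apply]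
  map_of_mem t x hx := by rw [h.map_of_mem t hx, hΦ.map_of_mem t hx]

theorem conj (h : IsIsotopyRel H f F) (e : X ≃ₜ X') :
    IsIsotopyRel (fun q ↦ e (H (q.1, e.symm q.2))) (e ∘ f ∘ e.symm) (e '' F) where
  continuous := e.continuous.comp (h.continuous.comp (by fun_prop))
  isHomeomorph t := e.isHomeomorph.comp ((h.isHomeomorph t).comp e.symm.isHomeomorph)
  map_zero x := by simp [h.map_zero]
  map_one x := by simp [h.map_one]
  map_of_mem t := by
    rintro _ ⟨x, hx, rfl⟩
    rw [e.symm_apply_apply, h.map_of_mem t hx]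

theorem mapsTo_compl (h : IsIsotopyRel H f F) (t : I) :
    Set.MapsTo (fun x ↦ H (t, x)) Fᶜ Fᶜ := fun _ hx hHx ↦
  hx ((h.isHomeomorph t).injective (h.map_of_mem t hHx) ▸ hHx)

end IsIsotopyRel

namespace IsotopicToIdRel

theorem mono (h : IsotopicToIdRel f F) (hG : G ⊆ F) : IsotopicToIdRel f G := by
  obtain ⟨H, hH⟩ := isotopicToIdRel_iff_exists.1 h
  exact (hH.congr_set fun t x hx ↦ hH.map_of_mem t (hG hx)).isotopicToIdRel

theorem conj (h : IsotopicToIdRel f F) (e : X ≃ₜ X') :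
    IsotopicToIdRel (e ∘ f ∘ e.symm) (e '' F) := by
  obtain ⟨H, hH⟩ := isotopicToIdRel_iff_exists.1 h
  exact (hH.conj e).isotopicToIdRel

theorem conj_iff (e : X ≃ₜ X') :
    IsotopicToIdRel (e ∘ f ∘ e.symm) (e '' F) ↔ IsotopicToIdRel f F := by
  refine ⟨fun h ↦ ?_, fun h ↦ h.conj e⟩
  simpa [Function.comp_def, Set.image_image] using h.conj e.symm

theorem conj_iterate {k : ℕ} (h : IsotopicToIdRel f^[k] F) (e : X ≃ₜ X') :
    IsotopicToIdRel (e ∘ f ∘ e.symm)^[k] (e '' F) := by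
  have semiconj : Function.Semiconj e f (e ∘ f ∘ e.symm) := fun x ↦ by simp
  convert h.conj e using 1
  ext x
  simpa using (semiconj.iterate_right k (e.symm x)).symm

end IsotopicToIdRel

theorem exists_continuousMap_lift {j : Y → X} (hj : IsEmbedding j) (φ : C(X', X))
    (hφ : ∀ x, φ x ∈ Set.range j) : ∃ ψ : C(X', Y), ∀ x, j (ψ x) = φ x := by
  choose ψ hψ using hφ
  refine ⟨⟨ψ, hj.continuous_iff.2 ?_⟩, hψ⟩
  exact (funext hψ : j ∘ ψ = φ) ▸ φ.continuous

namespace IsIsotopyRel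

variable {j : Y → X}

theorem exists_semiconj (h : IsIsotopyRel H f F) (hj : IsEmbedding j)
    (hrange : Set.range j = Fᶜ) : ∃ g : C(Y, Y), Function.Semiconj j g f := by
  have continuous_f : Continuous f :=
    (h.isHomeomorph 1).continuous.congr h.map_one
  refine exists_continuousMap_lift hj ⟨f ∘ j, continuous_f.comp hj.continuous⟩ fun y ↦ ?_
  have hy : H (1, j y) ∈ Fᶜ := h.mapsTo_compl 1 (hrange ▸ Set.mem_range_self y)
  rwa [h.map_one, ← hrange] at hy

theorem exists_homotopy (h : IsIsotopyRel H f F) (hj : IsEmbedding j)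
    (hrange : Set.range j = Fᶜ) {g : C(Y, Y)} (hg : Function.Semiconj j g f) :
    ∃ K : (ContinuousMap.id Y).Homotopy g, ∀ t y, j (K (t, y)) = H (t, j y) := by
  obtain ⟨K, hK⟩ := exists_continuousMap_lift hj
    ⟨fun q : I × Y ↦ H (q.1, j q.2), h.continuous.comp (by have := hj.continuous; fun_prop)⟩
    fun q ↦ hrange ▸ h.mapsTo_compl q.1 (hrange ▸ Set.mem_range_self q.2)
  exact ⟨⟨K, fun y ↦ hj.injective ((hK _).trans (h.map_zero _)),
    fun y ↦ hj.injective (((hK _).trans (h.map_one _)).trans (hg y).symm)⟩, fun t y ↦ hK (t, y)⟩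

end IsIsotopyRel

end Isotopy

/-! ### Point pushing -/

section PointPush

open OnePoint

variable {E : Type*} [NormedAddCommGroup E]

theorem hasBasis_nhds_infty_norm [ProperSpace E] : (𝓝 (∞ : OnePoint E)).HasBasis
    (fun _ : ℝ ↦ True) fun R ↦ {w | ∀ z : E, w = z → R < ‖z‖} := by
  rw [nhds_infty_eq, Filter.coclosedCompact_eq_cocompact, ← Metric.cobounded_eq_cocompact]
  convert ((Metric.hasBasis_cobounded_compl_closedBall (0 : E)).map OnePoint.some).sup_pure ∞
    using 2 with R
  ext w
  induction w using OnePoint.rec <;> simp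

theorem continuous_onePointMap_of_norm_sub_le [ProperSpace E] {T : Type*} [TopologicalSpace T]
    {φ : T → E → E} {b : T → ℝ} (hφ : Continuous fun q : T × E ↦ φ q.1 q.2) (hb : Continuous b)
    (hφb : ∀ t z, ‖φ t z - z‖ ≤ b t) :
    Continuous fun q : T × OnePoint E ↦ OnePoint.map (φ q.1) q.2 := by
  refine continuous_iff_continuousAt.2 fun ⟨t, w⟩ ↦ ?_
  induction w using OnePoint.rec with
  | infty =>
    refine (hasBasis_nhds_infty_norm (E := E)).tendsto_right_iff.2 fun R _ ↦ ?_
    have hbt : ∀ᶠ t' in 𝓝 t, b t' < b t + 1 := hb.continuousAt.eventually_lt_const (lt_add_one _)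
    have hfar := (hasBasis_nhds_infty_norm (E := E)).mem_of_mem (i := R + (b t + 1)) trivial
    rw [nhds_prod_eq]
    filter_upwards [hbt.prod_mk hfar] with ⟨t', w⟩ ⟨ht', hw⟩ z hz
    induction w using OnePoint.rec with
    | infty => exact absurd hz (infty_ne_coe z)
    | coe z' =>
      obtain rfl : φ t' z' = z := coe_injective hz
      have := norm_le_norm_add_norm_sub (φ t' z') z'
      linarith [hφb t' z', hw z' rfl]
  | coe z =>
    have coe_open : IsOpenEmbedding (Prod.map (id : T → T) ((↑) : E → OnePoint E)) :=
      IsOpenEmbedding.id.prodMap isOpenEmbedding_coe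
    exact (coe_open.continuousAt_iff (x := (t, z))).1 (continuous_coe.comp hφ).continuousAt

theorem abs_cutoff_sub_cutoff_le {r : ℝ} (hr : 0 < r) (x z z' : E) :
    |max 0 (1 - ‖z - x‖ / r) - max 0 (1 - ‖z' - x‖ / r)| ≤ ‖z - z'‖ / r := by
  rw [max_comm 0, max_comm 0]
  calc
    _ ≤ |1 - ‖z - x‖ / r - (1 - ‖z' - x‖ / r)| := abs_max_sub_max_le_abs _ _ _
    _ = |‖z' - x‖ - ‖z - x‖| / r := by
      rw [sub_sub_sub_cancel_left, ← sub_div, abs_div, abs_of_pos hr]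
    _ ≤ ‖z' - z‖ / r := by
      gcongr
      simpa using abs_norm_sub_norm_le (z' - x) (z - x)
    _ = ‖z - z'‖ / r := by rw [norm_sub_rev]

variable [NormedSpace ℝ E]

/-- The point push along `y - x`: it moves `x` to `y` and fixes all points at distance at least
`r` from `x`, interpolating linearly in the distance to `x`. -/
noncomputable def pointPush (r : ℝ) (x y z : E) : E :=
  z + max 0 (1 - ‖z - x‖ / r) • (y - x)

@[simp]
theorem pointPush_self (r : ℝ) (x : E) : pointPush r x x = id := by
  ext z
  simp [pointPush]

theorem pointPush_apply_left (r : ℝ) (x y : E) : pointPush r x y x = y := by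
  simp [pointPush]

theorem pointPush_of_le_norm {r : ℝ} (hr : 0 < r) {x z : E} (hz : r ≤ ‖z - x‖) (y : E) :
    pointPush r x y z = z := by
  simp [pointPush, max_eq_left (sub_nonpos.2 ((one_le_div hr).2 hz))]

theorem norm_pointPush_sub_le {r : ℝ} (hr : 0 < r) (x y z : E) :
    ‖pointPush r x y z - z‖ ≤ ‖y - x‖ := by
  have cutoff_le_one : max 0 (1 - ‖z - x‖ / r) ≤ 1 :=
    max_le zero_le_one (sub_le_self _ (by positivity))
  rw [pointPush, add_sub_cancel_left, norm_smul, Real.norm_of_nonneg (le_max_left _ _)]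
  exact mul_le_of_le_one_left (norm_nonneg _) cutoff_le_one

-- The displacement is Lipschitz with constant `‖y - x‖ / r < 1`.
theorem pointPush_bijective [CompleteSpace E] {r : ℝ} {x y : E} (hxy : ‖y - x‖ < r) :
    Function.Bijective (pointPush r x y) := by
  have hr : 0 < r := (norm_nonneg _).trans_lt hxy
  have approx : ApproximatesLinearOn (pointPush r x y)
      (ContinuousLinearEquiv.refl ℝ E : E →L[ℝ] E) Set.univ (‖y - x‖₊ / ⟨r, hr.le⟩) := by
    intro z _ z' _
    simp only [pointPush, ContinuousLinearEquiv.coe_refl, ContinuousLinearMap.id_apply]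
    rw [add_sub_add_comm, add_sub_cancel_left, ← sub_smul, norm_smul, Real.norm_eq_abs]
    calc
      _ ≤ ‖z - z'‖ / r * ‖y - x‖ := by gcongr; exact abs_cutoff_sub_cutoff_le hr x z z'
      _ = ‖y - x‖ / r * ‖z - z'‖ := by ring
  have lt_one : Subsingleton E ∨ ‖y - x‖₊ / ⟨r, hr.le⟩ <
      ‖((ContinuousLinearEquiv.refl ℝ E).symm : E →L[ℝ] E)‖₊⁻¹ := by
    rcases subsingleton_or_nontrivial E with hE | hE
    · exact .inl hE
    refine .inr ?_
    rw [ContinuousLinearEquiv.refl_symm, ContinuousLinearEquiv.coe_refl,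
      ContinuousLinearMap.nnnorm_id, inv_one]
    exact (div_lt_one hr).2 hxy
  exact ⟨Set.injOn_univ.1 (approx.injOn lt_one), approx.surjective lt_one⟩

variable [ProperSpace E] {γ γ' : I → E} {A : Set E}

theorem isIsotopyRel_pointPush {r : ℝ} (hγ : Continuous γ) (hγ' : Continuous γ')
    (hd : ∀ t, ‖γ' t - γ t‖ < r) (h0 : γ 0 = γ' 0) (h1 : γ 1 = γ' 1)
    (hA : ∀ t, ∀ a ∈ A, r ≤ ‖a - γ t‖) :
    IsIsotopyRel (fun q : I × OnePoint E ↦ OnePoint.map (pointPush r (γ q.1) (γ' q.1)) q.2) id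
      (insert ∞ ((↑) '' A)) := by
  have hr : 0 < r := (norm_nonneg _).trans_lt (hd 0)
  have joint_continuous :
      Continuous fun q : I × OnePoint E ↦ OnePoint.map (pointPush r (γ q.1) (γ' q.1)) q.2 :=
    continuous_onePointMap_of_norm_sub_le (by unfold pointPush; fun_prop) (hγ'.sub hγ).norm
      fun t z ↦ norm_pointPush_sub_le hr _ _ z
  refine ⟨joint_continuous, fun t ↦ isHomeomorph_iff_continuous_bijective.2
    ⟨joint_continuous.comp (by fun_prop), ?_⟩, fun w ↦ by simp [h0], fun w ↦ by simp [h1], ?_⟩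
  · exact (Equiv.ofBijective _ (pointPush_bijective (hd t))).optionCongr.bijective
  · rintro t _ (rfl | ⟨a, ha, rfl⟩)
    · rfl
    · exact congrArg OnePoint.some (pointPush_of_le_norm hr (hA t a ha) _)

theorem IsIsotopyRel.exists_trace_eq_of_homotopy {f : OnePoint E → OnePoint E}
    {H : I × OnePoint E → OnePoint E} (hA : IsClosed A)
    (hH : IsIsotopyRel H f (insert ∞ ((↑) '' A))) {p : OnePoint E} {h : I × I → E}
    (hc : Continuous h) (hhA : ∀ q, h q ∉ A) (h0 : ∀ s, h (s, 0) = h (0, 0))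
    (h1 : ∀ s, h (s, 1) = h (0, 1)) (hp : ∀ t, H (t, p) = h (0, t)) :
    ∃ H', IsIsotopyRel H' f (insert ∞ ((↑) '' A)) ∧ ∀ t, H' (t, p) = h (1, t) := by
  obtain ⟨r, hr, hrA⟩ : ∃ r : ℝ, 0 < r ∧ ∀ q, ∀ a ∈ A, r ≤ ‖a - h q‖ := by
    obtain ⟨r, hr, hrA⟩ := (isCompact_range hc).exists_thickening_subset_open hA.isOpen_compl
      (Set.range_subset_iff.2 hhA)
    refine ⟨r, hr, fun q a ha ↦ le_of_not_gt fun hlt ↦ hrA ?_ ha⟩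
    exact Metric.mem_thickening_iff.2 ⟨h q, Set.mem_range_self q, dist_eq_norm a _ ▸ hlt⟩
  let HasTrace (s : I) : Prop :=
    ∃ H, IsIsotopyRel H f (insert ∞ ((↑) '' A)) ∧ ∀ t, H (t, p) = h (s, t)
  have hasTrace_of_close {s s' : I} (hss' : ∀ t, ‖h (s', t) - h (s, t)‖ < r) :
      HasTrace s → HasTrace s' := by
    rintro ⟨H, hH, hp⟩
    refine ⟨_, (isIsotopyRel_pointPush (by fun_prop) (by fun_prop) hss'
      ((h0 s).trans (h0 s').symm) ((h1 s).trans (h1 s').symm) fun t ↦ hrA _).comp hH, fun t ↦ ?_⟩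
    simp only [hp, OnePoint.map_some, pointPush_apply_left]
  refine PreconnectedSpace.induction₂' (fun s s' ↦ HasTrace s → HasTrace s')
    (fun s ↦ ?_) ⟨fun _ _ _ h h' ↦ h' ∘ h⟩ 0 1 ⟨H, hH, hp⟩
  obtain ⟨δ, hδ, hu⟩ := Metric.uniformContinuous_iff.1
    (CompactSpace.uniformContinuous_of_continuous hc) r hr
  filter_upwards [Metric.ball_mem_nhds s hδ] with s' hs'
  have close (t : I) : dist (h (s', t)) (h (s, t)) < r := hu (by simpa [Prod.dist_eq, hδ] using hs')
  exact ⟨hasTrace_of_close fun t ↦ dist_eq_norm (h (s', t)) _ ▸ close t,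
    hasTrace_of_close fun t ↦ dist_eq_norm (h (s, t)) _ ▸ dist_comm (h (s', t)) _ ▸ close t⟩

end PointPush

/-! ### The cross-ratio -/

section CrossRatio

open OnePoint

section Algebra

variable {K : Type*} [Field K] {x y z w : OnePoint K}

/-- The determinant of the `2 × 2` matrix with rows `u` and `v`. -/
def det₂ (u v : K × K) : K := u.1 * v.2 - u.2 * v.1

@[simp]
theorem det₂_self (u : K × K) : det₂ u u = 0 := by rw [det₂]; ring

theorem det₂_swap (u v : K × K) : det₂ u v = -det₂ v u := by simp only [det₂]; ring

theorem det₂_smul_sub_det₂_smul (u v w : K × K) :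
    det₂ w v • u - det₂ w u • v = det₂ u v • w := by
  ext <;> simp only [det₂, Prod.fst_sub, Prod.snd_sub, Prod.smul_fst, Prod.smul_snd,
    smul_eq_mul] <;> ring

open Classical in
/-- The point `[u.1 : u.2]` of the projective line `K ∪ {∞}`; the vector `u = 0`, which represents
no point, is sent to `∞`. -/
noncomputable def ofHomogeneous (u : K × K) : OnePoint K :=
  if u.2 = 0 then ∞ else ↑(u.1 / u.2)

theorem ofHomogeneous_of_snd_eq_zero {u : K × K} (hu : u.2 = 0) : ofHomogeneous u = ∞ :=
  if_pos hu

theorem ofHomogeneous_of_snd_ne_zero {u : K × K} (hu : u.2 ≠ 0) :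
    ofHomogeneous u = ↑(u.1 / u.2) :=
  if_neg hu

theorem ofHomogeneous_smul {a : K} (ha : a ≠ 0) (u : K × K) :
    ofHomogeneous (a • u) = ofHomogeneous u := by
  by_cases hu : u.2 = 0
  · simp [ofHomogeneous, hu]
  · simp [ofHomogeneous, hu, ha, mul_div_mul_left]

theorem ofHomogeneous_eq_iff {u v : K × K} (hu : u ≠ 0) (hv : v ≠ 0) :
    ofHomogeneous u = ofHomogeneous v ↔ det₂ u v = 0 := by
  obtain ⟨u₁, u₂⟩ := u
  obtain ⟨v₁, v₂⟩ := v
  by_cases hu₂ : u₂ = 0 <;> by_cases hv₂ : v₂ = 0 <;>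
    simp_all [ofHomogeneous, det₂, div_eq_div_iff, sub_eq_zero, mul_comm]

/-- The standard homogeneous coordinates `[z : 1]` of `z` and `[1 : 0]` of `∞`. -/
def homogeneousCoords (w : OnePoint K) : K × K := w.elim (1, 0) fun z ↦ (z, 1)

theorem homogeneousCoords_ne_zero (w : OnePoint K) : homogeneousCoords w ≠ 0 := by
  induction w using OnePoint.rec <;> simp [homogeneousCoords]

@[simp]
theorem ofHomogeneous_homogeneousCoords (w : OnePoint K) :
    ofHomogeneous (homogeneousCoords w) = w := by
  induction w using OnePoint.rec <;> simp [homogeneousCoords, ofHomogeneous]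

theorem exists_ofHomogeneous_eq (w : OnePoint K) : ∃ u ≠ 0, ofHomogeneous u = w :=
  ⟨_, homogeneousCoords_ne_zero w, ofHomogeneous_homogeneousCoords w⟩

theorem exists_homogeneousCoords_eq_smul {u : K × K} (hu : u ≠ 0) :
    ∃ a : K, a ≠ 0 ∧ homogeneousCoords (ofHomogeneous u) = a • u := by
  obtain ⟨u₁, u₂⟩ := u
  by_cases hu₂ : u₂ = 0
  · have hu₁ : u₁ ≠ 0 := by simpa [hu₂] using hu
    exact ⟨u₁⁻¹, inv_ne_zero hu₁, by simp [homogeneousCoords, ofHomogeneous, hu₁, hu₂]⟩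
  · refine ⟨u₂⁻¹, inv_ne_zero hu₂, ?_⟩
    simp [homogeneousCoords, ofHomogeneous, hu₂, div_eq_inv_mul]

/-- Homogeneous coordinates of the cross-ratio of four points of the projective line given by
homogeneous coordinates. -/
def crossRatioCoords (x y z w : K × K) : K × K := (det₂ w x * det₂ y z, det₂ w z * det₂ y x)

theorem crossRatioCoords_smul (a b c d : K) (x y z w : K × K) :
    crossRatioCoords (a • x) (b • y) (c • z) (d • w) =
      (a * b * c * d) • crossRatioCoords x y z w := by
  ext <;> simp only [crossRatioCoords, det₂, Prod.smul_fst, Prod.smul_snd, smul_eq_mul] <;> ring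

theorem crossRatioCoords_ne_zero {x y z w : K × K} (hxy : det₂ x y ≠ 0) (hxz : det₂ x z ≠ 0)
    (hyz : det₂ y z ≠ 0) (hw : w ≠ 0) : crossRatioCoords x y z w ≠ 0 := by
  have hyx : det₂ y x ≠ 0 := by rwa [det₂_swap, neg_ne_zero]
  intro h
  have hwx : det₂ w x = 0 := by simpa [crossRatioCoords, hyz] using congrArg Prod.fst h
  have hwz : det₂ w z = 0 := by simpa [crossRatioCoords, hyx] using congrArg Prod.snd h
  have cramer := det₂_smul_sub_det₂_smul x z w
  rw [hwx, hwz, zero_smul, zero_smul, sub_zero] at cramer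
  exact smul_ne_zero hxz hw cramer.symm

theorem det₂_crossRatioCoords (x y z w w' : K × K) :
    det₂ (crossRatioCoords x y z w) (crossRatioCoords x y z w') =
      det₂ w w' * (det₂ x z * det₂ y z * det₂ y x) := by
  simp only [crossRatioCoords, det₂]
  ring

theorem crossRatioCoords_smul_sub_smul (x y z v : K × K) :
    crossRatioCoords x y z ((v.1 * det₂ y x) • z - (v.2 * det₂ y z) • x) =
      (det₂ y x * det₂ y z * det₂ z x) • v := by
  ext <;> simp only [crossRatioCoords, det₂, Prod.fst_sub, Prod.snd_sub, Prod.smul_fst,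
    Prod.smul_snd, smul_eq_mul] <;> ring

/-- The cross-ratio as a function of `w`: for distinct `x`, `y`, `z` it is the Möbius
transformation taking `x`, `y`, `z` to `0`, `1`, `∞`. -/
noncomputable def crossRatio (x y z w : OnePoint K) : OnePoint K :=
  ofHomogeneous (crossRatioCoords (homogeneousCoords x) (homogeneousCoords y)
    (homogeneousCoords z) (homogeneousCoords w))

theorem crossRatio_ofHomogeneous {x y z w : K × K} (hx : x ≠ 0) (hy : y ≠ 0) (hz : z ≠ 0)
    (hw : w ≠ 0) :
    crossRatio (ofHomogeneous x) (ofHomogeneous y) (ofHomogeneous z) (ofHomogeneous w) =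
      ofHomogeneous (crossRatioCoords x y z w) := by
  obtain ⟨a, ha, hax⟩ := exists_homogeneousCoords_eq_smul hx
  obtain ⟨b, hb, hby⟩ := exists_homogeneousCoords_eq_smul hy
  obtain ⟨c, hc, hcz⟩ := exists_homogeneousCoords_eq_smul hz
  obtain ⟨d, hd, hdw⟩ := exists_homogeneousCoords_eq_smul hw
  rw [crossRatio, hax, hby, hcz, hdw, crossRatioCoords_smul, ofHomogeneous_smul (by simp [*])]

theorem det₂_homogeneousCoords_ne_zero (h : x ≠ y) :
    det₂ (homogeneousCoords x) (homogeneousCoords y) ≠ 0 := by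
  rw [Ne, ← ofHomogeneous_eq_iff (homogeneousCoords_ne_zero x) (homogeneousCoords_ne_zero y)]
  simpa using h

theorem crossRatio_first (hxy : x ≠ y) (hxz : x ≠ z) :
    crossRatio x y z x = ((0 : K) : OnePoint K) := by
  have hxz := det₂_homogeneousCoords_ne_zero hxz
  have hyx := det₂_homogeneousCoords_ne_zero hxy.symm
  simp [crossRatio, crossRatioCoords, ofHomogeneous, hxz, hyx]

theorem crossRatio_second (hxy : x ≠ y) (hyz : y ≠ z) :
    crossRatio x y z y = ((1 : K) : OnePoint K) := by
  have hyz := det₂_homogeneousCoords_ne_zero hyz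
  have hyx := det₂_homogeneousCoords_ne_zero hxy.symm
  simp [crossRatio, crossRatioCoords, ofHomogeneous, hyz, hyx, mul_comm]

theorem crossRatio_third (x y z : OnePoint K) : crossRatio x y z z = ∞ := by
  simp [crossRatio, crossRatioCoords, ofHomogeneous]

theorem bijective_crossRatio (hxy : x ≠ y) (hxz : x ≠ z) (hyz : y ≠ z) :
    Function.Bijective (crossRatio x y z) := by
  obtain ⟨x, hx, rfl⟩ := exists_ofHomogeneous_eq x
  obtain ⟨y, hy, rfl⟩ := exists_ofHomogeneous_eq y
  obtain ⟨z, hz, rfl⟩ := exists_ofHomogeneous_eq z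
  rw [Ne, ofHomogeneous_eq_iff ‹_› ‹_›] at hxy hxz hyz
  have hyx : det₂ y x ≠ 0 := by rwa [det₂_swap, neg_ne_zero]
  have hzx : det₂ z x ≠ 0 := by rwa [det₂_swap, neg_ne_zero]
  refine ⟨fun w w' h ↦ ?_, fun v ↦ ?_⟩
  · obtain ⟨w, hw, rfl⟩ := exists_ofHomogeneous_eq w
    obtain ⟨w', hw', rfl⟩ := exists_ofHomogeneous_eq w'
    have coords_ne {w : K × K} (hw : w ≠ 0) := crossRatioCoords_ne_zero hxy hxz hyz hw
    rw [crossRatio_ofHomogeneous hx hy hz hw, crossRatio_ofHomogeneous hx hy hz hw',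
      ofHomogeneous_eq_iff (coords_ne hw) (coords_ne hw'), det₂_crossRatioCoords] at h
    exact (ofHomogeneous_eq_iff hw hw').2 (by simpa [hxz, hyz, hyx] using h)
  · obtain ⟨v, hv, rfl⟩ := exists_ofHomogeneous_eq v
    have hcoords := crossRatioCoords_smul_sub_smul x y z v
    set w := (v.1 * det₂ y x) • z - (v.2 * det₂ y z) • x
    have hc : det₂ y x * det₂ y z * det₂ z x ≠ 0 := by simp [hyx, hyz, hzx]
    have hw : w ≠ 0 := by
      intro hw
      refine smul_ne_zero hc hv (hcoords.symm.trans ?_)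
      simp [hw, crossRatioCoords, det₂]
    exact ⟨ofHomogeneous w,
      by rw [crossRatio_ofHomogeneous hx hy hz hw, hcoords, ofHomogeneous_smul hc]⟩

end Algebra

section Topology

variable {K : Type*} [NormedField K] [ProperSpace K]

theorem continuousAt_ofHomogeneous {u : K × K} (hu : u ≠ 0) : ContinuousAt ofHomogeneous u := by
  by_cases hu₂ : u.2 = 0
  · have hu₁ : u.1 ≠ 0 := fun hu₁ ↦ hu (Prod.ext hu₁ hu₂)
    rw [ContinuousAt, ofHomogeneous_of_snd_eq_zero hu₂]
    refine (hasBasis_nhds_infty_norm (E := K)).tendsto_right_iff.2 fun R _ ↦ ?_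
    have hlt : ∀ᶠ v : K × K in 𝓝 u, R * ‖v.2‖ < ‖v.1‖ :=
      ContinuousAt.eventually_lt (by fun_prop) (by fun_prop) (by simp [hu₁, hu₂])
    filter_upwards [hlt] with v hv a ha
    by_cases hv₂ : v.2 = 0
    · exact absurd ((ofHomogeneous_of_snd_eq_zero hv₂).symm.trans ha) (infty_ne_coe a)
    · rw [ofHomogeneous_of_snd_ne_zero hv₂] at ha
      rwa [← coe_injective ha, norm_div, lt_div_iff₀ (norm_pos_iff.2 hv₂)]
  · refine (continuous_coe.continuousAt.comp
      (continuousAt_fst.div continuousAt_snd hu₂)).congr ?_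
    filter_upwards [continuousAt_snd.eventually_ne hu₂] with v hv
    exact (ofHomogeneous_of_snd_ne_zero hv).symm

theorem exists_continuousAt_ofHomogeneous_eq (w : OnePoint K) :
    ∃ s : OnePoint K → K × K, ContinuousAt s w ∧
      ∀ᶠ v in 𝓝 w, s v ≠ 0 ∧ ofHomogeneous (s v) = v := by
  induction w using OnePoint.rec with
  | infty =>
    refine ⟨fun v ↦ (1, v.elim 0 (·⁻¹)), continuousAt_const.prodMk ?_, ?_⟩
    · refine continuousAt_infty'.2 ?_
      rw [Filter.coclosedCompact_eq_cocompact, ← Metric.cobounded_eq_cocompact]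
      exact Filter.tendsto_inv₀_cobounded
    · filter_upwards [(hasBasis_nhds_infty_norm (E := K)).mem_of_mem (i := 0) trivial] with v hv
      induction v using OnePoint.rec with
      | infty => simp [ofHomogeneous]
      | coe z => simp [ofHomogeneous, norm_pos_iff.1 (hv z rfl)]
  | coe z =>
    refine ⟨homogeneousCoords, ?_, .of_forall fun v ↦
      ⟨homogeneousCoords_ne_zero v, ofHomogeneous_homogeneousCoords v⟩⟩
    exact continuousAt_coe.2 (continuousAt_id.prodMk continuousAt_const)

variable {T : Type*} [TopologicalSpace T]

theorem continuous_crossRatio {x y z w : T → OnePoint K} (hx : Continuous x) (hy : Continuous y)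
    (hz : Continuous z) (hw : Continuous w) (hxy : ∀ t, x t ≠ y t) (hxz : ∀ t, x t ≠ z t)
    (hyz : ∀ t, y t ≠ z t) : Continuous fun t ↦ crossRatio (x t) (y t) (z t) (w t) := by
  refine continuous_iff_continuousAt.2 fun t ↦ ?_
  have exists_lift {v : T → OnePoint K} (hv : Continuous v) : ∃ u : T → K × K,
      ContinuousAt u t ∧ ∀ᶠ t' in 𝓝 t, u t' ≠ 0 ∧ ofHomogeneous (u t') = v t' := by
    obtain ⟨s, hs, hsv⟩ := exists_continuousAt_ofHomogeneous_eq (v t)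
    exact ⟨s ∘ v, hs.comp hv.continuousAt, hv.continuousAt.eventually hsv⟩
  obtain ⟨X, hX, hXx⟩ := exists_lift hx
  obtain ⟨Y, hY, hYy⟩ := exists_lift hy
  obtain ⟨Z, hZ, hZz⟩ := exists_lift hz
  obtain ⟨W, hW, hWw⟩ := exists_lift hw
  let V (t' : T) := crossRatioCoords (X t') (Y t') (Z t') (W t')
  have hV₀ : V t ≠ 0 := by
    obtain ⟨hX₀, hXt⟩ := hXx.self_of_nhds
    obtain ⟨hY₀, hYt⟩ := hYy.self_of_nhds
    obtain ⟨hZ₀, hZt⟩ := hZz.self_of_nhds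
    refine crossRatioCoords_ne_zero ?_ ?_ ?_ hWw.self_of_nhds.1 <;>
      rw [Ne, ← ofHomogeneous_eq_iff ‹_› ‹_›]
    exacts [hXt ▸ hYt ▸ hxy t, hXt ▸ hZt ▸ hxz t, hYt ▸ hZt ▸ hyz t]
  have hV : ContinuousAt V t := by
    simp only [V, crossRatioCoords, det₂]
    fun_prop
  refine ((continuousAt_ofHomogeneous hV₀).comp hV).congr ?_
  filter_upwards [hXx, hYy, hZz, hWw] with t' ⟨hX₀, hXt⟩ ⟨hY₀, hYt⟩ ⟨hZ₀, hZt⟩ ⟨hW₀, hWt⟩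
  rw [Function.comp_apply, ← crossRatio_ofHomogeneous hX₀ hY₀ hZ₀ hW₀, hXt, hYt, hZt, hWt]

theorem isHomeomorph_crossRatio {x y z : OnePoint K} (hxy : x ≠ y) (hxz : x ≠ z) (hyz : y ≠ z) :
    IsHomeomorph (crossRatio x y z) :=
  isHomeomorph_iff_continuous_bijective.2
    ⟨continuous_crossRatio continuous_const continuous_const continuous_const continuous_id
      (fun _ ↦ hxy) (fun _ ↦ hxz) (fun _ ↦ hyz), bijective_crossRatio hxy hxz hyz⟩

-- Undo the motion of `a`, `b`, `c` by the Möbius maps taking their images back to `a`, `b`, `c`.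
theorem IsotopicToIdRel.of_fixed_triple {f : OnePoint K → OnePoint K} (hf : IsotopicToIdRel f ∅)
    {a b c : OnePoint K} (hab : a ≠ b) (hac : a ≠ c) (hbc : b ≠ c) (ha : f a = a) (hb : f b = b)
    (hc : f c = c) : IsotopicToIdRel f {a, b, c} := by
  obtain ⟨H, hH⟩ := isotopicToIdRel_iff_exists.1 hf
  have hne {u v : OnePoint K} (huv : u ≠ v) (t : I) : H (t, u) ≠ H (t, v) :=
    (hH.isHomeomorph t).injective.ne huv
  have track (u : OnePoint K) : Continuous fun q : I × OnePoint K ↦ H (q.1, u) :=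
    hH.continuous.comp (by fun_prop)
  let e := (isHomeomorph_crossRatio hab hac hbc).homeomorph
  have he (w : OnePoint K) : e w = crossRatio a b c w := rfl
  let Φ (q : I × OnePoint K) := e.symm (crossRatio (H (q.1, a)) (H (q.1, b)) (H (q.1, c)) q.2)
  have hΦ : IsIsotopyRel Φ id ∅ :=
    { continuous := e.symm.continuous.comp <|
        continuous_crossRatio (track a) (track b) (track c) continuous_snd
          (fun q ↦ hne hab q.1) (fun q ↦ hne hac q.1) (fun q ↦ hne hbc q.1)
      isHomeomorph t := e.symm.isHomeomorph.comp
        (isHomeomorph_crossRatio (hne hab t) (hne hac t) (hne hbc t))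
      map_zero w := by simp only [Φ, hH.map_zero, ← he, e.symm_apply_apply]
      map_one w := by simp only [Φ, hH.map_one, ha, hb, hc, ← he, e.symm_apply_apply, id]
      map_of_mem _ _ hx := hx.elim }
  refine ((hΦ.comp hH).congr_set fun t w hw ↦ ?_).isotopicToIdRel
  rw [e.symm_apply_eq, he]
  rcases hw with rfl | rfl | rfl
  · rw [crossRatio_first hab hac, crossRatio_first (hne hab t) (hne hac t)]
  · rw [crossRatio_second hab hbc, crossRatio_second (hne hab t) (hne hbc t)]
  · rw [crossRatio_third, crossRatio_third]

end Topology

end CrossRatio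

/-! ### Adding fixed points -/

section AddPoint

theorem IsIsotopyRel.exists_homotopy_refl {X Y : Type*} [TopologicalSpace X] [TopologicalSpace Y]
    {H H' : I × X → X} {f : X → X} {F : Set X} {k : ℕ}
    {j : Y → X} {y : Y} (hH : IsIsotopyRel H f F) (hH' : IsIsotopyRel H' f^[k] (insert (j y) F))
    (hj : IsEmbedding j) (hrange : Set.range j = Fᶜ) (hy : f (j y) = j y)
    (hroot : ∀ γ : FundamentalGroup Y y,
      γ ^ k ∈ Subgroup.center (FundamentalGroup Y y) → γ = 1) :
    ∃ γ : Path y y, (∀ t, j (γ t) = H (t, j y)) ∧ γ.Homotopic (.refl y) := by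
  obtain ⟨g, hg⟩ := hH.exists_semiconj hj hrange
  obtain ⟨K, hK⟩ := hH.exists_homotopy hj hrange hg
  have hH'F : IsIsotopyRel H' f^[k] F :=
    hH'.congr_set fun t x hx ↦ hH'.map_of_mem t (Set.mem_insert_of_mem _ hx)
  obtain ⟨K', hK'⟩ := hH'F.exists_homotopy (g := ⟨g^[k], g.continuous.iterate k⟩) hj hrange
    (hg.iterate_right k)
  have hgy : g y = y := hj.injective ((hg y).trans hy)
  have trace_eq_one : traceClass K hgy = 1 :=
    hroot _ <| traceClass_pow_mem_center K hgy (H' := K') fun t ↦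
      hj.injective ((hK' t y).trans (hH'.map_of_mem t (Set.mem_insert _ _)))
  exact ⟨(K.evalAt y).cast rfl hgy.symm, fun t ↦ hK t y,
    Path.Homotopic.Quotient.eq.1 trace_eq_one⟩

open OnePoint

theorem range_coe_compl {X : Type*} (A : Set X) :
    Set.range (fun z : ↥Aᶜ ↦ ((z : X) : OnePoint X)) = (insert ∞ ((↑) '' A))ᶜ := by
  ext w
  induction w using OnePoint.rec <;> simp

variable {f : OnePoint ℂ → OnePoint ℂ} {A A₀ : Set ℂ} {k : ℕ}

theorem IsotopicToIdRel.insert_of_iterate (hf : IsotopicToIdRel f (insert ∞ ((↑) '' A)))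
    (hA : A.Finite) (hA₂ : A.Nontrivial) {p : ℂ} (hpA : p ∉ A) (hfp : f p = p) (hk : k ≠ 0)
    (hfk : IsotopicToIdRel f^[k] (insert ↑p (insert ∞ ((↑) '' A)))) :
    IsotopicToIdRel f (insert ↑p (insert ∞ ((↑) '' A))) := by
  obtain ⟨H, hH⟩ := isotopicToIdRel_iff_exists.1 hf
  obtain ⟨H', hH'⟩ := isotopicToIdRel_iff_exists.1 hfk
  obtain ⟨γ, hγ, ⟨h⟩⟩ := hH.exists_homotopy_refl (y := (⟨p, hpA⟩ : ↥Aᶜ)) hH'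
    (isOpenEmbedding_coe.isEmbedding.comp .subtypeVal) (range_coe_compl A) hfp
    fun _ ↦ eq_one_of_pow_mem_center_puncturedPlane .subtypeVal hA hA₂ Subtype.range_coe hk
  obtain ⟨L, hL, hLp⟩ := hH.exists_trace_eq_of_homotopy (h := fun q ↦ h q) hA.isClosed
    (continuous_subtype_val.comp h.continuous) (fun q ↦ (h q).2) (by simp) (by simp)
    fun t ↦ by simpa using (hγ t).symm
  refine (hL.congr_set ?_).isotopicToIdRel
  rintro t x (rfl | hx)
  · simp [hLp]
  · exact hL.map_of_mem t hx

theorem IsotopicToIdRel.of_iterate_of_subset (hf : IsotopicToIdRel f (insert ∞ ((↑) '' A₀)))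
    (hA : A.Finite) (hA₀ : A₀.Nontrivial) (hsub : A₀ ⊆ A) (hfix : ∀ p ∈ A, f p = p) (hk : k ≠ 0)
    (hfk : IsotopicToIdRel f^[k] (insert ∞ ((↑) '' A))) :
    IsotopicToIdRel f (insert ∞ ((↑) '' A)) := by
  suffices IsotopicToIdRel f (insert ∞ ((↑) '' (A ∪ A₀))) by
    rwa [Set.union_eq_self_of_subset_right hsub] at this
  refine hA.induction_on_subset
    (motive := fun B _ ↦ IsotopicToIdRel f (insert ∞ ((↑) '' (B ∪ A₀)))) A
    (by rwa [Set.empty_union]) fun {p B} hpA hBA _ hB ↦ ?_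
  by_cases hp : p ∈ B ∪ A₀
  · rwa [Set.insert_union, Set.insert_eq_of_mem hp]
  · have hBA₀ : insert p (B ∪ A₀) ⊆ A := Set.insert_subset hpA (Set.union_subset hBA hsub)
    rw [Set.insert_union, Set.image_insert_eq, Set.insert_comm]
    refine hB.insert_of_iterate (hA.subset (Set.union_subset hBA hsub))
      (hA₀.mono Set.subset_union_right) hp (hfix p hpA) hk (hfk.mono ?_)
    rw [Set.insert_comm, ← Set.image_insert_eq]
    exact Set.insert_subset_insert (Set.image_mono hBA₀)

theorem insert_infty_image_preimage {X : Type*} {F : Set (OnePoint X)} (hF : ∞ ∈ F) :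
    insert ∞ ((↑) '' ((↑) ⁻¹' F : Set X)) = F := by
  ext w
  induction w using OnePoint.rec <;> simp [hF]

theorem IsotopicToIdRel.of_iterate {F : Set (OnePoint ℂ)} (hf : IsotopicToIdRel f ∅)
    (hF : F.Finite) (hF₃ : 3 ≤ F.ncard) (hfix : ∀ x ∈ F, f x = x) (hk : k ≠ 0)
    (hfk : IsotopicToIdRel f^[k] F) : IsotopicToIdRel f F := by
  obtain ⟨a, b, c, ha, hb, hc, hab, hac, hbc⟩ := (Set.two_lt_ncard_iff hF).1 hF₃
  let e := (isHomeomorph_crossRatio hab hac hbc).homeomorph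
  have hea : e a = ((0 : ℂ) : OnePoint ℂ) := crossRatio_first hab hac
  have heb : e b = ((1 : ℂ) : OnePoint ℂ) := crossRatio_second hab hbc
  have hec : e c = ∞ := crossRatio_third a b c
  have hfabc := (hf.of_fixed_triple hab hac hbc (hfix a ha) (hfix b hb) (hfix c hc)).conj e
  have he_image : insert ∞ ((↑) '' ((↑) ⁻¹' (e '' F) : Set ℂ)) = e '' F :=
    insert_infty_image_preimage (hec ▸ Set.mem_image_of_mem e hc)
  rw [← conj_iff e, ← he_image]
  refine of_iterate_of_subset (A₀ := {0, 1}) ?_ ((hF.image e).preimage coe_injective.injOn)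
    (Set.nontrivial_pair zero_ne_one) ?_ ?_ hk
    (by rw [he_image]; exact hfk.conj_iterate e)
  · convert hfabc using 1
    simp only [Set.image_insert_eq, Set.image_singleton, hea, heb, hec]
    grind
  · rintro _ (rfl | rfl)
    exacts [⟨a, ha, hea⟩, ⟨b, hb, heb⟩]
  · rintro p ⟨x, hx, hxp⟩
    simp [← hxp, hfix x hx]

end AddPoint

/-- Let `f` be a homeomorphism of the unit sphere `S² ⊆ ℝ³`
isotopic to the identity, let `F` be a finite set of fixed points of `f` with at
least `3` elements, and let `k ≥ 1` be such that `f^k` is isotopic to the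
identity relative to `F`. Then `f` is isotopic to the identity relative to `F`. -/
theorem stmt11 (f : sphere (0 : EuclideanSpace ℝ (Fin 3)) 1 →
      sphere (0 : EuclideanSpace ℝ (Fin 3)) 1)
    (hf : IsHomeomorph f) (hiso : IsotopicToIdRel f ∅)
    (F : Set (sphere (0 : EuclideanSpace ℝ (Fin 3)) 1))
    (hFfix : F ⊆ {x | f x = x}) (hFfin : F.Finite) (hF3 : 3 ≤ F.ncard)
    (k : ℕ) (hk : 1 ≤ k) (hfk : IsotopicToIdRel f^[k] F) :
    IsotopicToIdRel f F := by
  let e := (onePointEquivSphereOfFinrankEq (ι := Fin 3) (V := ℂ)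
    (by simp [Complex.finrank_real_complex])).symm
  have hfix : ∀ w ∈ e '' F, (e ∘ f ∘ e.symm) w = w := by
    rintro _ ⟨x, hx, rfl⟩
    simpa using hFfix hx
  have hcard : 3 ≤ (e '' F).ncard := by rwa [Set.ncard_image_of_injective F e.injective]
  exact (IsotopicToIdRel.conj_iff e).1 <| (Set.image_empty e ▸ hiso.conj e).of_iterate
    (hFfin.image e) hcard hfix (Nat.one_le_iff_ne_zero.1 hk) (hfk.conj_iterate e)
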